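/- arXiv:math/0511114 — 2 statements merged into one kernel-verified Lean document; each statement's English description precedes it below -/
import Mathlib

section
/- For every n ≥ 1, the number of triples (f,g,h) of permutations of {1,…,n} satisfying Des(g⁻¹) ⊆ Des(f), Des(h⁻¹) ⊆ Des(g), and Des(h) ⊇ {1,…,n−2} equals Σ_{i=0}^{n−1} n!/i!. -/
/-- The descent set of a permutation `f` of `{1,…,n}` (realized as `Equiv.Perm (Fin n)`
with 1-based positions: position `i` is the index `i-1` of `Fin n`):
`Des f = {i : 1 ≤ i ≤ n-1 and f(i) > f(i+1)}`. -/
def Des {n : ℕ} (f : Equiv.Perm (Fin n)) : Finset ℕ :=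
  (Finset.Ico 1 n).filter fun i =>
    ∃ h : i < n, f ⟨i, h⟩ < f ⟨i - 1, Nat.lt_of_le_of_lt (Nat.sub_le i 1) h⟩

/-!
The condition on `h` means that its one-line notation lists all values but one, `k`, decreasingly,
followed by `k`. The inclusion `Des h⁻¹ ⊆ Des g` then means that `g` has at most one ascent, at a
place determined by `k`, so `g` lists the complement of a set `B` decreasingly and then `B`
decreasingly, where `k` and the size of `B` determine each other. Finally `Des g⁻¹ ⊆ Des f` says
that every ascent of `f` goes from a position outside `B` to one in `B`. So we count the pairs
`(B, f)` with this property for which the set `B` of marked positions is nonempty.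

Let `s n` count these pairs. Marking in addition every position to the right of the last marked
position `p` does not change the condition on `f`. Deleting the letter `x` at `p` then leaves a pair
`(B', g)` of size `n - 1` in which `B'` may be empty. Conversely `x` and `(B', g)` determine `p`: it
has to be inserted just before the longest final run of marked positions carrying letters below `x`.
Only the decreasing permutation goes with `B' = ∅`, so `s n = n * (s (n - 1) + 1)`.
-/

open Finset OrderDual

/-- Every ascent of `f` between neighbouring positions leads from outside `B` into `B`. Stated
contrapositively: a covering pair `i ⋖ j` that does not enter `B` carries a descent of `f`. -/
def AscentsEnter {ι β : Type*} [Preorder ι] [LT β] (B : Finset ι) (f : ι → β) : Prop :=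
  ∀ ⦃i j⦄, i ⋖ j → (j ∈ B → i ∈ B) → f j < f i

/-- As `Prop` is ordered by implication, antitonicity of `(· ∈ B)` says that the marked positions of
the interval come first. -/
theorem ascentsEnter_iff_antitoneOn {ι β : Type*} [LinearOrder ι] [LocallyFiniteOrder ι]
    [Preorder β] {B : Finset ι} {f : ι → β} :
    AscentsEnter B f ↔ ∀ ⦃i j⦄, i < j → AntitoneOn (· ∈ B) (Set.Icc i j) → f j < f i := by
  refine ⟨fun hf i j hij hB => ?_, fun hf i j hij hB => hf hij.lt fun k hk l hl hkl => ?_⟩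
  · let := LinearLocallyFiniteOrder.succOrder ι
    refine strictAntiOn_of_succ_lt Set.ordConnected_Icc (fun k hk hki hks => ?_)
      (Set.left_mem_Icc.2 hij.le) (Set.right_mem_Icc.2 hij.le) hij
    exact hf (Order.covBy_succ_of_not_isMax hk) (hB hki hks (Order.le_succ k))
  · rcases (hij.Icc_eq ▸ hk) with rfl | rfl <;> rcases (hij.Icc_eq ▸ hl) with rfl | rfl
    · exact le_rfl
    · exact hB
    · exact absurd hij.lt hkl.not_gt
    · exact le_rfl

theorem ascentsEnter_singleton_iff {ι β : Type*} [Preorder ι] [LT β] {k : ι} {f : ι → β} :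
    AscentsEnter {k} f ↔ ∀ ⦃i j⦄, i ⋖ j → j ≠ k → f j < f i := by
  refine forall₃_congr fun i j hij => imp_congr_left ?_
  simp only [mem_singleton]
  exact ⟨fun h hj => hij.ne ((h hj).trans hj.symm), fun hj h => absurd h hj⟩

variable {n : ℕ}

theorem mem_Des_iff_exists_covBy {f : Equiv.Perm (Fin n)} {k : ℕ} :
    k ∈ Des f ↔ ∃ i j : Fin n, i ⋖ j ∧ (j : ℕ) = k ∧ f j < f i := by
  simp only [Des, mem_filter, mem_Ico, Fin.covBy_iff, Nat.covBy_iff_add_one_eq]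
  constructor
  · rintro ⟨⟨hk, -⟩, hkn, hlt⟩
    exact ⟨_, ⟨k, hkn⟩, Nat.sub_add_cancel hk, rfl, hlt⟩
  · rintro ⟨⟨i, hi⟩, ⟨_, hj⟩, rfl, rfl, hlt⟩
    exact ⟨⟨Nat.le_add_left 1 i, hj⟩, hj, hlt⟩

theorem val_mem_Des_iff_of_covBy {f : Equiv.Perm (Fin n)} {i j : Fin n} (hij : i ⋖ j) :
    (j : ℕ) ∈ Des f ↔ f j < f i := by
  refine mem_Des_iff_exists_covBy.trans ⟨?_, fun h => ⟨i, j, hij, rfl, h⟩⟩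
  rintro ⟨i', j', hij', hj, hlt⟩
  obtain rfl := Fin.ext hj
  rwa [hij.unique_left hij']

theorem Des_subset_Des_iff {u f : Equiv.Perm (Fin n)} :
    Des u ⊆ Des f ↔ ∀ ⦃i j : Fin n⦄, i ⋖ j → u j < u i → f j < f i := by
  constructor
  · intro h i j hij hu
    exact (val_mem_Des_iff_of_covBy hij).1 (h ((val_mem_Des_iff_of_covBy hij).2 hu))
  · intro h k hk
    obtain ⟨i, j, hij, rfl, hu⟩ := mem_Des_iff_exists_covBy.1 hk
    exact (val_mem_Des_iff_of_covBy hij).2 (h hij hu)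

theorem Icc_subset_Des_iff {h : Equiv.Perm (Fin (n + 1))} :
    Icc 1 (n + 1 - 2) ⊆ Des h ↔ AscentsEnter {Fin.last n} h := by
  rw [ascentsEnter_singleton_iff]
  constructor
  · intro hd i j hij hj
    have hij' := Fin.lt_def.1 hij.lt
    have hj' := Fin.val_lt_last hj
    exact (val_mem_Des_iff_of_covBy hij).1 (hd (mem_Icc.2 ⟨by omega, by omega⟩))
  · intro hd k hk
    obtain ⟨hk1, hk2⟩ := mem_Icc.1 hk
    have hij : (⟨k - 1, by omega⟩ : Fin (n + 1)) ⋖ ⟨k, by omega⟩ := by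
      rw [Fin.covBy_iff, Nat.covBy_iff_add_one_eq]
      exact Nat.sub_add_cancel hk1
    exact (val_mem_Des_iff_of_covBy hij).2 (hd hij (Fin.ne_of_lt (by simp [Fin.lt_def]; omega)))

/-- The key by which `blockPerm B` sorts: `false < true` puts the positions outside `B` first, and
the order dual lists each of the two blocks decreasingly. -/
def blockKey (B : Finset (Fin n)) (v : Fin n) : Bool ×ₗ (Fin n)ᵒᵈ :=
  toLex (decide (v ∈ B), toDual v)

/-- The permutation whose one-line notation lists the complement of `B` decreasingly and then `B`
decreasingly. -/
def blockPerm (B : Finset (Fin n)) : Equiv.Perm (Fin n) := Tuple.sort (blockKey B)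

theorem blockKey_injective (B : Finset (Fin n)) : Function.Injective (blockKey B) := fun _ _ h =>
  toDual.injective (Prod.ext_iff.1 (toLex.injective h)).2

theorem blockKey_lt_blockKey_iff {B : Finset (Fin n)} {v w : Fin n} :
    blockKey B v < blockKey B w ↔ v ∉ B ∧ w ∈ B ∨ (v ∈ B ↔ w ∈ B) ∧ w < v := by
  simp [blockKey, Prod.Lex.toLex_lt_toLex, Bool.lt_iff]

theorem strictMono_blockKey_comp_blockPerm (B : Finset (Fin n)) :
    StrictMono (blockKey B ∘ blockPerm B) :=
  (Tuple.monotone_sort _).strictMono_of_injective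
    ((blockKey_injective B).comp (blockPerm B).injective)

theorem blockPerm_eq_of_strictMono {B : Finset (Fin n)} {g : Equiv.Perm (Fin n)}
    (hg : StrictMono (blockKey B ∘ g)) : blockPerm B = g :=
  Equiv.ext fun i => blockKey_injective B <| congrFun (Tuple.unique_monotone
    (strictMono_blockKey_comp_blockPerm B).monotone hg.monotone) i

theorem Des_inv_blockPerm_subset_iff {B : Finset (Fin n)} {f : Equiv.Perm (Fin n)} :
    Des (blockPerm B)⁻¹ ⊆ Des f ↔ AscentsEnter B f := by
  refine Des_subset_Des_iff.trans (forall₃_congr fun i j hij => imp_congr_left ?_)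
  rw [← (strictMono_blockKey_comp_blockPerm B).lt_iff_lt]
  simp only [Function.comp_apply, Equiv.Perm.inv_def, Equiv.apply_symm_apply,
    blockKey_lt_blockKey_iff, hij.lt, and_true]
  tauto

theorem blockPerm_apply_mem_iff {B : Finset (Fin n)} {i : Fin n} :
    blockPerm B i ∈ B ↔ n - #B ≤ i := by
  have hcard : #{j | blockPerm B j ∉ B} = n - #B := by
    rw [card_bijective (t := Bᶜ) _ (blockPerm B).bijective (by simp), card_compl,
      Fintype.card_fin]
  have hdown : ∀ ⦃j k⦄, k ≤ j → blockPerm B j ∉ B → blockPerm B k ∉ B := by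
    intro j k hkj hj hk
    exact ((strictMono_blockKey_comp_blockPerm B).monotone hkj).not_gt
      (blockKey_lt_blockKey_iff.2 (Or.inl ⟨hj, hk⟩))
  rw [← not_iff_not, not_le, ← hcard]
  exact (Fin.lt_card_filter_univ_iff_apply_of_imp _ (fun j k hkj => hdown hkj)).symm

theorem exists_blockPerm_eq_iff {g : Equiv.Perm (Fin n)} {k : Fin n} :
    (∃ B, #B = n - k ∧ blockPerm B = g) ↔ AscentsEnter {k} g := by
  have hle : ∀ ⦃i j : Fin n⦄, i ⋖ j → j ≠ k → (k ≤ i ↔ k ≤ j) := fun i j hij hj => by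
    rw [← hij.lt_iff_le_left, lt_iff_le_and_ne, and_iff_left hj.symm]
  rw [ascentsEnter_singleton_iff]
  constructor
  · rintro ⟨B, hB, rfl⟩ i j hij hj
    have hmem : blockPerm B i ∈ B ↔ blockPerm B j ∈ B := by
      have hk : n - #B = k := by omega
      simpa only [blockPerm_apply_mem_iff, hk, Fin.val_fin_le] using hle hij hj
    have hlt := blockKey_lt_blockKey_iff.1 (strictMono_blockKey_comp_blockPerm B hij.lt)
    tauto
  · intro hg
    refine ⟨(Ici k).map g.toEmbedding, by rw [card_map, Fin.card_Ici],
      blockPerm_eq_of_strictMono ((strictMono_iff_forall_covBy _).2 fun i j hij => ?_)⟩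
    simp only [Function.comp_apply, blockKey_lt_blockKey_iff, mem_map_equiv, g.symm_apply_apply,
      mem_Ici]
    by_cases hj : j = k
    · exact Or.inl ⟨hj ▸ hij.lt.not_ge, hj.ge⟩
    · exact Or.inr ⟨hle hij hj, hg hij hj⟩

theorem eq_of_blockPerm_eq_of_card_eq {B C : Finset (Fin n)} (h : blockPerm B = blockPerm C)
    (hcard : #B = #C) : B = C := by
  ext v
  obtain ⟨i, rfl⟩ := (blockPerm B).surjective v
  rw [blockPerm_apply_mem_iff, h, blockPerm_apply_mem_iff, hcard]

theorem Des_chain_iff_exists_blockPerm {f g h : Equiv.Perm (Fin (n + 1))} :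
    (Des g⁻¹ ⊆ Des f ∧ Des h⁻¹ ⊆ Des g ∧ Icc 1 (n + 1 - 2) ⊆ Des h) ↔
      ∃ (B : Finset (Fin (n + 1))) (k : Fin (n + 1)),
        #B = n + 1 - k ∧ AscentsEnter B f ∧ blockPerm B = g ∧ blockPerm {k} = h := by
  rw [Icc_subset_Des_iff, ← exists_blockPerm_eq_iff]
  constructor
  · rintro ⟨hf, hg, C, hC, rfl⟩
    obtain ⟨k, rfl⟩ := card_eq_one.1 (hC.trans (Nat.add_sub_cancel_left n 1))
    obtain ⟨B, hB, rfl⟩ := exists_blockPerm_eq_iff.2 (Des_inv_blockPerm_subset_iff.1 hg)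
    exact ⟨B, k, hB, Des_inv_blockPerm_subset_iff.1 hf, rfl, rfl⟩
  · rintro ⟨B, k, hB, hf, rfl, rfl⟩
    exact ⟨Des_inv_blockPerm_subset_iff.2 hf,
      Des_inv_blockPerm_subset_iff.2 (exists_blockPerm_eq_iff.1 ⟨B, hB, rfl⟩),
      {k}, (card_singleton k).trans (Nat.add_sub_cancel_left n 1).symm, rfl⟩

theorem card_triples_eq_card_ascentsEnter :
    Nat.card {t : Equiv.Perm (Fin (n + 1)) × Equiv.Perm (Fin (n + 1)) ×
          Equiv.Perm (Fin (n + 1)) //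
        Des t.2.1⁻¹ ⊆ Des t.1 ∧ Des t.2.2⁻¹ ⊆ Des t.2.1 ∧ Icc 1 (n + 1 - 2) ⊆ Des t.2.2} =
      Nat.card {q : Finset (Fin (n + 1)) × Equiv.Perm (Fin (n + 1)) //
        q.1.Nonempty ∧ AscentsEnter q.1 q.2} := by
  have hle (B : Finset (Fin (n + 1))) : #B ≤ n + 1 := card_finset_fin_le B
  let k (B : Finset (Fin (n + 1))) (hB : B.Nonempty) : Fin (n + 1) :=
    ⟨n + 1 - #B, Nat.sub_lt n.succ_pos hB.card_pos⟩
  symm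
  refine Nat.card_eq_of_bijective (fun q => ⟨(q.1.2, blockPerm q.1.1, blockPerm {k _ q.2.1}),
    Des_chain_iff_exists_blockPerm.2
      ⟨_, _, (Nat.sub_sub_self (hle _)).symm, q.2.2, rfl, rfl⟩⟩) ⟨?_, ?_⟩
  · rintro ⟨⟨B, f⟩, hB, _⟩ ⟨⟨C, f'⟩, hC, _⟩ h
    obtain ⟨rfl, hBC, hk⟩ : f = f' ∧ blockPerm B = blockPerm C ∧
        blockPerm {k B hB} = blockPerm {k C hC} := by
      simpa only [Subtype.mk.injEq, Prod.mk.injEq] using h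
    have hkBC : k B hB = k C hC :=
      singleton_injective (eq_of_blockPerm_eq_of_card_eq hk (by simp only [card_singleton]))
    have hcard : #B = #C := by
      rw [← Nat.sub_sub_self (hle B), ← Nat.sub_sub_self (hle C)]
      exact congrArg (n + 1 - ·) (Fin.ext_iff.1 hkBC)
    obtain rfl := eq_of_blockPerm_eq_of_card_eq hBC hcard
    rfl
  · rintro ⟨⟨f, g, h⟩, ht⟩
    obtain ⟨B, j, hB, hf, rfl, rfl⟩ := Des_chain_iff_exists_blockPerm.1 ht
    have hne : B.Nonempty := card_pos.1 (hB ▸ Nat.sub_pos_of_lt j.isLt)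
    obtain rfl : k B hne = j := Fin.ext (by simp only [k, hB, Nat.sub_sub_self j.isLt.le])
    exact ⟨⟨(B, f), hne, hf⟩, rfl⟩

theorem ascentsEnter_sdiff_Ioi_iff {ι β : Type*} [LinearOrder ι] [LocallyFiniteOrderTop ι]
    [LT β] {B : Finset ι} {p : ι} (hp : Ici p ⊆ B) {f : ι → β} :
    AscentsEnter (B \ Ioi p) f ↔ AscentsEnter B f := by
  refine forall₃_congr fun i j hij => imp_congr_left ?_
  simp only [mem_sdiff, mem_Ioi, not_lt]
  constructor
  · intro h hj
    by_cases hjp : j ≤ p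
    · exact (h ⟨hj, hjp⟩).1
    · exact hp (mem_Ici.2 (hij.le_of_lt (not_le.1 hjp)))
  · rintro h ⟨hj, hjp⟩
    exact ⟨h hj, hij.le.trans hjp⟩

theorem isGreatest_sdiff_Ioi {ι : Type*} [LinearOrder ι] [LocallyFiniteOrderTop ι]
    {B : Finset ι} {p : ι} (hp : Ici p ⊆ B) : IsGreatest (B \ Ioi p : Finset ι) p := by
  refine ⟨?_, fun i hi => ?_⟩
  · simpa using hp (mem_Ici.2 le_rfl)
  · simpa using (mem_sdiff.1 (mem_coe.1 hi)).2

theorem card_nonempty_ascentsEnter {ι : Type*} [LinearOrder ι] [LocallyFiniteOrderTop ι] :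
    Nat.card {q : Finset ι × Equiv.Perm ι // q.1.Nonempty ∧ AscentsEnter q.1 q.2} =
      Nat.card {r : ι × Finset ι × Equiv.Perm ι //
        Ici r.1 ⊆ r.2.1 ∧ AscentsEnter r.2.1 r.2.2} := by
  symm
  refine Nat.card_eq_of_bijective (fun r => ⟨(r.1.2.1 \ Ioi r.1.1, r.1.2.2),
    ⟨_, (isGreatest_sdiff_Ioi r.2.1).1⟩, (ascentsEnter_sdiff_Ioi_iff r.2.1).2 r.2.2⟩) ⟨?_, ?_⟩
  · rintro ⟨⟨p, B, f⟩, hB, _⟩ ⟨⟨p', B', f'⟩, hB', _⟩ h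
    obtain ⟨hsdiff, rfl⟩ : B \ Ioi p = B' \ Ioi p' ∧ f = f' :=
      Prod.ext_iff.1 (Subtype.ext_iff.1 h)
    obtain rfl : p = p' := (isGreatest_sdiff_Ioi hB).unique (hsdiff ▸ isGreatest_sdiff_Ioi hB')
    have hunion {C : Finset ι} (hC : Ici p ⊆ C) : C \ Ioi p ∪ Ioi p = C :=
      sdiff_union_of_subset (Ioi_subset_Ici_self.trans hC)
    obtain rfl : B = B' := by rw [← hunion (C := B) hB, hsdiff, hunion hB']
    rfl
  · rintro ⟨⟨C, f⟩, hC, hf⟩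
    have hsub : Ici (C.max' hC) ⊆ C ∪ Ioi (C.max' hC) := by
      rw [← Ioi_insert, insert_subset_iff]
      exact ⟨mem_union_left _ (C.max'_mem hC), subset_union_right⟩
    have hsdiff : (C ∪ Ioi (C.max' hC)) \ Ioi (C.max' hC) = C :=
      union_sdiff_cancel_right <| disjoint_left.2 fun i hi hlt =>
        (C.le_max' i hi).not_gt (mem_Ioi.1 hlt)
    exact ⟨⟨(C.max' hC, C ∪ Ioi (C.max' hC), f), hsub,
      (ascentsEnter_sdiff_Ioi_iff hsub).1 (hsdiff.symm ▸ hf)⟩, Subtype.ext (Prod.ext hsdiff rfl)⟩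

/-- `p` is the start of the longest run of indices satisfying `Q` that extends to the end. -/
theorem existsUnique_start_final_run (Q : Fin n → Prop) :
    ∃! p : Fin (n + 1), (∀ i, p ≤ i.castSucc → Q i) ∧ ∀ i, i.succ = p → ¬ Q i := by
  obtain ⟨p, hp⟩ := (Set.toFinite {p : Fin (n + 1) | ∀ i, p ≤ i.castSucc → Q i}).exists_minimal
    ⟨Fin.last n, fun i hi => absurd (Fin.castSucc_lt_last i) hi.not_gt⟩
  refine existsUnique_of_exists_of_unique ⟨p, hp.prop, fun i hi hQ => ?_⟩ ?_
  · have hmem : ∀ j : Fin n, i.castSucc ≤ j.castSucc → Q j := fun j hj => by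
      rcases (Fin.castSucc_le_castSucc_iff.1 hj).eq_or_lt with rfl | hlt
      · exact hQ
      · exact hp.prop j (hi ▸ Fin.succ_le_castSucc_iff.2 hlt)
    exact (hp.le_of_le hmem (hi ▸ i.castSucc_lt_succ.le)).not_gt (hi ▸ i.castSucc_lt_succ)
  · have hle {p q : Fin (n + 1)} (hp : ∀ i, p ≤ i.castSucc → Q i)
        (hq : ∀ i, i.succ = q → ¬ Q i) : q ≤ p := by
      by_contra! hlt
      obtain ⟨i, rfl⟩ := Fin.exists_succ_eq.2 (Fin.ne_zero_of_lt hlt)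
      exact hq i rfl (hp i (Fin.le_castSucc_iff.2 hlt))
    exact fun p q hp hq => (hle hq.1 hp.2).antisymm (hle hp.1 hq.2)

/-- The permutation obtained from `g` by inserting the value `x` at position `p`, after shifting up
the values from `x` on and the positions from `p` on. -/
def insertPerm (p x : Fin (n + 1)) (g : Equiv.Perm (Fin n)) : Equiv.Perm (Fin (n + 1)) :=
  (finSuccEquiv' p).trans ((Equiv.optionCongr g).trans (finSuccEquiv' x).symm)

@[simp]
theorem insertPerm_self (p x : Fin (n + 1)) (g : Equiv.Perm (Fin n)) : insertPerm p x g p = x := by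
  simp [insertPerm]

@[simp]
theorem insertPerm_succAbove (p x : Fin (n + 1)) (g : Equiv.Perm (Fin n)) (i : Fin n) :
    insertPerm p x g (p.succAbove i) = x.succAbove (g i) := by
  simp [insertPerm]

theorem insertPerm_injective (p : Fin (n + 1)) :
    Function.Injective fun q : Fin (n + 1) × Equiv.Perm (Fin n) => insertPerm p q.1 q.2 := by
  rintro ⟨x, g⟩ ⟨y, h⟩ heq
  obtain rfl : x = y := by simpa using DFunLike.congr_fun heq p
  obtain rfl : g = h := Equiv.ext fun i => Fin.succAbove_right_injective (p := x) <| by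
    simpa using DFunLike.congr_fun heq (p.succAbove i)
  rfl

theorem insertPerm_bijective (p : Fin (n + 1)) :
    Function.Bijective fun q : Fin (n + 1) × Equiv.Perm (Fin n) => insertPerm p q.1 q.2 :=
  (Fintype.bijective_iff_injective_and_card _).2
    ⟨insertPerm_injective p, by simp [Fintype.card_perm, Nat.factorial_succ]⟩

/-- The set of marked positions obtained from `B` by inserting a marked position `p`, after shifting
up the positions from `p` on. -/
def insertPos (p : Fin (n + 1)) (B : Finset (Fin n)) : Finset (Fin (n + 1)) :=
  insert p (B.map p.succAboveEmb)

theorem self_mem_insertPos (p : Fin (n + 1)) (B : Finset (Fin n)) : p ∈ insertPos p B :=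
  mem_insert_self _ _

theorem succAbove_mem_insertPos_iff {p : Fin (n + 1)} {B : Finset (Fin n)} {i : Fin n} :
    p.succAbove i ∈ insertPos p B ↔ i ∈ B := by
  simp [insertPos, Fin.succAbove_ne]

theorem exists_insertPos_eq_of_mem {p : Fin (n + 1)} {B : Finset (Fin (n + 1))} (hp : p ∈ B) :
    ∃ B' : Finset (Fin n), insertPos p B' = B := by
  refine ⟨univ.filter (p.succAbove · ∈ B), Finset.ext fun j => ?_⟩
  rcases Fin.eq_self_or_eq_succAbove p j with rfl | ⟨i, rfl⟩
  · simp [insertPos, hp]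
  · simp only [succAbove_mem_insertPos_iff, mem_filter_univ]

theorem insertPos_injective (p : Fin (n + 1)) : Function.Injective (insertPos p) := by
  intro B C h
  ext i
  rw [← succAbove_mem_insertPos_iff (p := p), ← succAbove_mem_insertPos_iff (p := p) (B := C)]
  exact Finset.ext_iff.1 h _

theorem Ici_subset_insertPos_iff {p : Fin (n + 1)} {B : Finset (Fin n)} :
    Ici p ⊆ insertPos p B ↔ ∀ i, p ≤ i.castSucc → i ∈ B := by
  constructor
  · intro h i hi
    rw [← succAbove_mem_insertPos_iff (p := p)]
    exact h (mem_Ici.2 ((Fin.lt_succAbove_iff_le_castSucc _ _).2 hi).le)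
  · intro h j hj
    rcases Fin.eq_self_or_eq_succAbove p j with rfl | ⟨i, rfl⟩
    · exact self_mem_insertPos _ _
    · exact succAbove_mem_insertPos_iff.2 <| h i <| (Fin.lt_succAbove_iff_le_castSucc _ _).1 <|
        (mem_Ici.1 hj).lt_of_ne (p.succAbove_ne i).symm

theorem succAbove_covBy_self_iff {p : Fin (n + 1)} {i : Fin n} :
    p.succAbove i ⋖ p ↔ i.succ = p := by
  rw [Fin.covBy_iff, Nat.covBy_iff_add_one_eq, Fin.succAbove]
  split_ifs with h
  · rw [Fin.ext_iff, Fin.val_succ, Fin.val_castSucc]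
  · rw [Fin.lt_def, Fin.val_castSucc] at h
    rw [Fin.ext_iff, Fin.val_succ]
    omega

theorem AscentsEnter.of_insertPerm {p x : Fin (n + 1)} {B : Finset (Fin n)}
    {g : Equiv.Perm (Fin n)} (hp : Ici p ⊆ insertPos p B)
    (hf : AscentsEnter (insertPos p B) (insertPerm p x g)) : AscentsEnter B g := by
  refine ascentsEnter_iff_antitoneOn.2 fun i j hij hB => ?_
  rw [← Fin.succAbove_lt_succAbove_iff (p := x), ← insertPerm_succAbove p,
    ← insertPerm_succAbove p]
  refine ascentsEnter_iff_antitoneOn.1 hf (Fin.succAbove_lt_succAbove_iff.2 hij)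
    fun k hk l hl hkl hlB => ?_
  rcases Fin.eq_self_or_eq_succAbove p k with rfl | ⟨k, rfl⟩
  · exact self_mem_insertPos _ _
  obtain ⟨m, hkm, hmj, hm⟩ : ∃ m, k ≤ m ∧ m ≤ j ∧ m ∈ B := by
    rcases Fin.eq_self_or_eq_succAbove p l with rfl | ⟨l, rfl⟩
    · exact ⟨j, Fin.succAbove_le_succAbove_iff.1 hk.2, le_rfl,
        succAbove_mem_insertPos_iff.1 (hp (mem_Ici.2 hl.2))⟩
    · exact ⟨l, Fin.succAbove_le_succAbove_iff.1 hkl, Fin.succAbove_le_succAbove_iff.1 hl.2,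
        succAbove_mem_insertPos_iff.1 hlB⟩
  have hik : i ≤ k := Fin.succAbove_le_succAbove_iff.1 hk.1
  exact succAbove_mem_insertPos_iff.2 (hB ⟨hik, hkm.trans hmj⟩ ⟨hik.trans hkm, hmj⟩ hkm hm)

/-- All positions to the right of `p` are marked, so their letters must be below `x`; the letter
just before `p` must be above `x` if its position is marked. -/
theorem ascentsEnter_insertPerm_iff {p x : Fin (n + 1)} {B : Finset (Fin n)}
    {g : Equiv.Perm (Fin n)} :
    Ici p ⊆ insertPos p B ∧ AscentsEnter (insertPos p B) (insertPerm p x g) ↔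
      AscentsEnter B g ∧ (∀ i, p ≤ i.castSucc → i ∈ B ∧ (g i).castSucc < x) ∧
        ∀ i, i.succ = p → ¬ (i ∈ B ∧ (g i).castSucc < x) := by
  constructor
  · rintro ⟨hp, hf⟩
    refine ⟨hf.of_insertPerm hp, fun i hi => ⟨Ici_subset_insertPos_iff.1 hp i hi, ?_⟩,
      fun i hi ⟨hiB, hlt⟩ => ?_⟩
    · have hlt := ascentsEnter_iff_antitoneOn.1 hf ((Fin.lt_succAbove_iff_le_castSucc p i).2 hi)
        fun k hk _ _ _ _ => hp (mem_Ici.2 hk.1)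
      rwa [insertPerm_self, insertPerm_succAbove, Fin.succAbove_lt_iff_castSucc_lt] at hlt
    · have hle := hf (succAbove_covBy_self_iff.2 hi) fun _ => succAbove_mem_insertPos_iff.2 hiB
      rw [insertPerm_self, insertPerm_succAbove, Fin.lt_succAbove_iff_le_castSucc] at hle
      exact hle.not_gt hlt
  · rintro ⟨hg, hge, hlt⟩
    refine ⟨Ici_subset_insertPos_iff.2 fun i hi => (hge i hi).1, fun i j hij hB => ?_⟩
    rcases Fin.eq_self_or_eq_succAbove p i with rfl | ⟨a, rfl⟩
    · obtain ⟨b, rfl⟩ := (Fin.eq_self_or_eq_succAbove i j).resolve_left hij.ne'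
      rw [insertPerm_self, insertPerm_succAbove, Fin.succAbove_lt_iff_castSucc_lt]
      exact (hge b ((Fin.lt_succAbove_iff_le_castSucc i b).1 hij.lt)).2
    rw [succAbove_mem_insertPos_iff] at hB
    rcases Fin.eq_self_or_eq_succAbove p j with rfl | ⟨b, rfl⟩
    · rw [insertPerm_self, insertPerm_succAbove, Fin.lt_succAbove_iff_le_castSucc, ← not_lt]
      exact fun hax => hlt a (succAbove_covBy_self_iff.1 hij) ⟨hB (self_mem_insertPos _ _), hax⟩
    · rw [succAbove_mem_insertPos_iff] at hB
      rw [insertPerm_succAbove, insertPerm_succAbove, Fin.succAbove_lt_succAbove_iff]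
      exact hg (hij.of_image p.succAboveOrderEmb) hB

theorem ascentsEnter_empty_iff {g : Equiv.Perm (Fin n)} :
    AscentsEnter ∅ g ↔ g = Fin.revPerm := by
  have hanti : AscentsEnter ∅ g ↔ StrictAnti g := by
    simp only [AscentsEnter, notMem_empty, imp_self, forall_const, strictAnti_iff_forall_covBy]
  rw [hanti]
  constructor
  · exact fun hg => DFunLike.coe_injective <|
      (hg.dual_right.range_inj Fin.rev_strictAnti.dual_right).1
        (by simp [Set.range_comp, Fin.rev_surjective.range_eq])
  · rintro rfl
    exact Fin.rev_strictAnti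

theorem card_ascentsEnter :
    Nat.card {q : Finset (Fin n) × Equiv.Perm (Fin n) // AscentsEnter q.1 q.2} =
      Nat.card {q : Finset (Fin n) × Equiv.Perm (Fin n) //
        q.1.Nonempty ∧ AscentsEnter q.1 q.2} + 1 := by
  have h : {q : Finset (Fin n) × Equiv.Perm (Fin n) | AscentsEnter q.1 q.2} =
      insert (∅, Fin.revPerm) {q | q.1.Nonempty ∧ AscentsEnter q.1 q.2} := by
    ext ⟨B, g⟩
    rcases B.eq_empty_or_nonempty with rfl | hB
    · simp [ascentsEnter_empty_iff]
    · simp [hB, hB.ne_empty]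
  exact (congrArg Set.ncard h).trans (Set.ncard_insert_of_notMem (by simp) (Set.toFinite _))

theorem card_Ici_subset_ascentsEnter :
    Nat.card {r : Fin (n + 1) × Finset (Fin (n + 1)) × Equiv.Perm (Fin (n + 1)) //
        Ici r.1 ⊆ r.2.1 ∧ AscentsEnter r.2.1 r.2.2} =
      (n + 1) * Nat.card {q : Finset (Fin n) × Equiv.Perm (Fin n) // AscentsEnter q.1 q.2} := by
  choose p hp hpu using fun s : Fin (n + 1) × Finset (Fin n) × Equiv.Perm (Fin n) =>
    existsUnique_start_final_run fun i => i ∈ s.2.1 ∧ (s.2.2 i).castSucc < s.1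
  let G : Fin (n + 1) × {q : Finset (Fin n) × Equiv.Perm (Fin n) // AscentsEnter q.1 q.2} →
      {r : Fin (n + 1) × Finset (Fin (n + 1)) × Equiv.Perm (Fin (n + 1)) //
        Ici r.1 ⊆ r.2.1 ∧ AscentsEnter r.2.1 r.2.2} := fun s =>
    ⟨(p (s.1, s.2), insertPos (p (s.1, s.2)) s.2.1.1, insertPerm (p (s.1, s.2)) s.1 s.2.1.2),
      ascentsEnter_insertPerm_iff.2 ⟨s.2.2, hp (s.1, s.2)⟩⟩
  have hG : Function.Bijective G := by
    constructor
    · rintro ⟨x, ⟨B, g⟩, hB⟩ ⟨y, ⟨C, h⟩, hC⟩ hG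
      obtain ⟨hpos, hmark, hperm⟩ := by simpa only [G, Subtype.mk.injEq, Prod.mk.injEq] using hG
      rw [← hpos] at hmark hperm
      obtain rfl : B = C := insertPos_injective _ hmark
      obtain ⟨rfl, rfl⟩ := Prod.mk.inj (insertPerm_injective _ hperm)
      rfl
    · rintro ⟨⟨r, C, f⟩, hC, hf⟩
      obtain ⟨B, rfl⟩ : ∃ B, insertPos r B = C := exists_insertPos_eq_of_mem (hC (mem_Ici.2 le_rfl))
      obtain ⟨⟨x, g⟩, rfl⟩ := (insertPerm_bijective r).surjective f
      obtain ⟨hB, hr⟩ := ascentsEnter_insertPerm_iff.1 ⟨hC, hf⟩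
      obtain rfl : r = p _ := hpu (x, B, g) r hr
      exact ⟨(x, ⟨(B, g), hB⟩), rfl⟩
  rw [← Nat.card_eq_of_bijective G hG, Nat.card_prod, Nat.card_fin]

theorem sum_factorial_div_factorial_succ (n : ℕ) :
    ∑ i ∈ range (n + 1), (n + 1).factorial / i.factorial =
      (n + 1) * (∑ i ∈ range n, n.factorial / i.factorial + 1) := by
  rw [sum_range_succ, mul_add, mul_sum, Nat.factorial_succ, mul_one,
    Nat.mul_div_cancel _ n.factorial_pos]
  congr 1
  exact sum_congr rfl fun i hi =>
    Nat.mul_div_assoc _ (Nat.factorial_dvd_factorial (mem_range.1 hi).le)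

theorem card_nonempty_ascentsEnter_eq_sum (n : ℕ) :
    Nat.card {q : Finset (Fin n) × Equiv.Perm (Fin n) // q.1.Nonempty ∧ AscentsEnter q.1 q.2} =
      ∑ i ∈ range n, n.factorial / i.factorial := by
  induction n with
  | zero => simp [eq_empty_of_isEmpty]
  | succ n ih =>
    rw [card_nonempty_ascentsEnter, card_Ici_subset_ascentsEnter, card_ascentsEnter, ih,
      sum_factorial_div_factorial_succ]

/-- The number `b_{n,4}(Δ_{n-1})` of triples `(f,g,h)` of permutations of `{1,…,n}`
with `Des (g⁻¹) ⊆ Des f`, `Des (h⁻¹) ⊆ Des g` and `Des h ⊇ {1,…,n-2}` equals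
`Σ_{i=0}^{n-1} n!/i!`. -/
theorem card_triples_normal_last_superset (n : ℕ) (hn : 1 ≤ n) :
    Nat.card {t : Equiv.Perm (Fin n) × Equiv.Perm (Fin n) × Equiv.Perm (Fin n) //
        Des t.2.1⁻¹ ⊆ Des t.1 ∧ Des t.2.2⁻¹ ⊆ Des t.2.1 ∧
          Finset.Icc 1 (n - 2) ⊆ Des t.2.2} =
      ∑ i ∈ Finset.range n, n.factorial / i.factorial := by
  obtain ⟨m, rfl⟩ := Nat.exists_eq_add_of_le' hn
  exact card_triples_eq_card_ascentsEnter.trans (card_nonempty_ascentsEnter_eq_sum (m + 1))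
end

section
/- For every integer m ≥ 1, the following identity holds in the rationals: Σ over all compositions (p_1,…,p_k) of m (finite sequences of positive integers with p_1 + ⋯ + p_k = m) of the product ((p_1−1)/p_1!)·((p_2−1)/p_2!)·⋯·((p_{k−1}−1)/p_{k−1}!)·(p_k/p_k!) equals 1 (for k = 1 the product is just p_1/p_1!). -/
/-!
Removing the first part `i + 1` of a composition of `n + 1` gives a composition of `n - i`, so the
sums of weights `S` satisfy `S (n + 1) = ∑ i < n, i / (i + 1)! * S (n - i) + 1 / n!`, where `1 / n!`
is the weight `(n + 1) / (n + 1)!` of the composition with a single part. By strong induction every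
`S (n - i)` on the right is `1`, and since `i / (i + 1)! = 1 / i! - 1 / (i + 1)!` the sum telescopes
to `1 - 1 / n!`.
-/

/-- The weight of a composition `(p₁,…,p_k)`:
`((p₁-1)/p₁!)·((p₂-1)/p₂!)·⋯·((p_{k-1}-1)/p_{k-1}!)·(p_k/p_k!)`
(for `k = 1` this is just `p₁/p₁!`, the empty product being `1`). -/
def wq (l : List ℕ) : ℚ :=
  (l.dropLast.map fun (p : ℕ) => ((p : ℚ) - 1) / (Nat.factorial p : ℚ)).prod *
    ((l.getLastD 1 : ℚ) / (Nat.factorial (l.getLastD 1) : ℚ))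

open Finset
open scoped Nat

section FirstPart

variable {n : ℕ}

/-- The composition of `n + 1` obtained by prepending a first part to a composition of the rest.
The first part is `i + 1` rather than `i`, so that it is positive for every `i : Fin (n + 1)`. -/
@[simps]
def prependPart (i : Fin (n + 1)) (c : Composition (n - i)) : Composition (n + 1) where
  blocks := (i + 1) :: c.blocks
  blocks_pos := by
    simpa using fun p hp => c.blocks_pos hp
  blocks_sum := by
    rw [List.sum_cons, c.blocks_sum]
    lia

theorem prependPart_injective :
    Function.Injective fun x : Σ i : Fin (n + 1), Composition (n - i) => prependPart x.1 x.2 := by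
  rintro ⟨i, c⟩ ⟨j, d⟩ h
  obtain ⟨hij, hcd⟩ := List.cons.inj (congrArg Composition.blocks h)
  obtain rfl : i = j := Fin.ext (Nat.succ_injective hij)
  obtain rfl : c = d := Composition.ext hcd
  rfl

theorem exists_prependPart_eq (c : Composition (n + 1)) :
    ∃ (i : Fin (n + 1)) (d : Composition (n - i)), prependPart i d = c := by
  obtain ⟨blocks, blocks_pos, blocks_sum⟩ := c
  cases blocks with
  | nil => simp at blocks_sum
  | cons p l =>
    have hp : 0 < p := blocks_pos List.mem_cons_self
    rw [List.sum_cons] at blocks_sum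
    refine ⟨⟨p - 1, by lia⟩, ⟨l, fun hq => blocks_pos (List.mem_cons_of_mem p hq), ?_⟩, ?_⟩
    · simp only
      lia
    · ext1
      simp only [prependPart_blocks, Nat.sub_add_cancel hp]

theorem prependPart_bijective :
    Function.Bijective fun x : Σ i : Fin (n + 1), Composition (n - i) => prependPart x.1 x.2 :=
  ⟨prependPart_injective, fun c =>
    let ⟨i, d, h⟩ := exists_prependPart_eq c
    ⟨⟨i, d⟩, h⟩⟩

theorem sum_composition_succ {M : Type*} [AddCommMonoid M] (f : List ℕ → M) :
    ∑ c : Composition (n + 1), f c.blocks =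
      ∑ i ∈ range (n + 1), ∑ c : Composition (n - i), f ((i + 1) :: c.blocks) := by
  rw [Finset.sum_range, ← Fintype.sum_sigma']
  exact (prependPart_bijective.sum_comp fun c => f c.blocks).symm

end FirstPart

theorem sum_composition_zero {M : Type*} [AddCommMonoid M] (f : List ℕ → M) :
    ∑ c : Composition 0, f c.blocks = f [] := by
  have blocks_eq (c : Composition 0) : c.blocks = [] := c.blocks_eq_nil.2 rfl
  simp [blocks_eq, composition_card]

theorem sum_range_div_factorial_succ {K : Type*} [Field K] [CharZero K] (n : ℕ) :
    ∑ i ∈ range n, (i : K) / (i + 1)! = 1 - 1 / n ! := by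
  have div_eq_sub (i : ℕ) : (i : K) / (i + 1)! = 1 / (i !) - 1 / (i + 1)! := by
    have : (i ! : K) ≠ 0 := mod_cast i.factorial_ne_zero
    have : (i + 1 : K) ≠ 0 := i.cast_add_one_ne_zero
    rw [Nat.factorial_succ]
    push_cast
    field_simp
    ring
  simp only [div_eq_sub, sum_range_sub' fun i => 1 / (i ! : K), Nat.factorial_zero, Nat.cast_one,
    div_one]

theorem wq_singleton_succ (n : ℕ) : wq [n + 1] = 1 / n ! := by
  have : (n + 1 : ℚ) ≠ 0 := n.cast_add_one_ne_zero
  simp [wq, Nat.factorial_succ, field]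

theorem wq_cons (p : ℕ) {l : List ℕ} (hl : l ≠ []) : wq (p :: l) = (p - 1) / p ! * wq l := by
  obtain ⟨q, t, rfl⟩ := List.exists_cons_of_ne_nil hl
  simp [wq, mul_assoc]

theorem sum_wq_cons {m : ℕ} (hm : m ≠ 0) (p : ℕ) :
    ∑ c : Composition m, wq (p :: c.blocks) =
      (p - 1) / p ! * ∑ c : Composition m, wq c.blocks := by
  rw [mul_sum]
  exact sum_congr rfl fun c _ => wq_cons p (c.blocks_eq_nil.not.2 hm)

theorem sum_wq_succ (n : ℕ) :
    ∑ c : Composition (n + 1), wq c.blocks =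
      ∑ i ∈ range n, i / (i + 1)! * ∑ c : Composition (n - i), wq c.blocks + 1 / n ! := by
  rw [sum_composition_succ, sum_range_succ, Nat.sub_self,
    sum_composition_zero fun l => wq ((n + 1) :: l), wq_singleton_succ]
  congr 1
  refine sum_congr rfl fun i hi => ?_
  rw [sum_wq_cons (Nat.sub_ne_zero_of_lt (mem_range.1 hi)), Nat.cast_succ, add_sub_cancel_right]

/-- For every `m ≥ 1`, the sum over all compositions `(p₁,…,p_k)` of `m` of
`((p₁-1)/p₁!)·⋯·((p_{k-1}-1)/p_{k-1}!)·(p_k/p_k!)` equals `1`. -/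
theorem sum_composition_weight_eq_one (m : ℕ) (hm : 1 ≤ m) :
    ∑ c : Composition m, wq c.blocks = 1 := by
  induction m using Nat.strong_induction_on with
  | _ m ih =>
    obtain ⟨n, rfl⟩ := Nat.exists_eq_add_of_le' hm
    have sum_eq_one : ∀ i ∈ range n, ∑ c : Composition (n - i), wq c.blocks = 1 := fun i hi =>
      ih (n - i) (by lia) (Nat.sub_pos_of_lt (mem_range.1 hi))
    calc
      ∑ c : Composition (n + 1), wq c.blocks
      _ = ∑ i ∈ range n, i / (i + 1)! * ∑ c : Composition (n - i), wq c.blocks + 1 / n ! :=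
        sum_wq_succ n
      _ = ∑ i ∈ range n, (i : ℚ) / (i + 1)! + 1 / n ! := by
        rw [sum_congr rfl fun i hi => by rw [sum_eq_one i hi, mul_one]]
      _ = 1 := by rw [sum_range_div_factorial_succ, sub_add_cancel]
end
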